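/- arXiv:2003.00372 — 6 statements merged into one kernel-verified Lean document; each statement's English description precedes it below -/
import Mathlib

section
/- Modulus Reduction Theorem: Let p be a polynomial with complex coefficients of degree n ≥ 2 and F(z) = |p(z)|². Let z₀ ∈ ℂ with p(z₀) ≠ 0, let k = k(z₀), u_k = u_k(z₀), c_k, C_k and θ be the Robust Newton parameters at z₀, and let z₁ = N̂_p(z₀) be the Robust Newton iterate. Then F(z₁) − F(z₀) ≤ −9·A(z₀)²·(C_k/3)^(k+1) ≤ −(1/2)·|u_k(z₀)|^(k+1)/(18^k·A(z₀)^(2k)). -/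
open Polynomial Filter Topology
open scoped Classical

noncomputable section

/-- The `j`-th derivative of `p`, evaluated at `z`. -/
def dEval (p : Polynomial ℂ) (j : ℕ) (z : ℂ) : ℂ :=
  (Polynomial.derivative^[j] p).eval z

/-- The index `k(z) = min {j ≥ 1 : p^{(j)}(z) ≠ 0}`. -/
def kIndex (p : Polynomial ℂ) (z : ℂ) : ℕ :=
  sInf {j : ℕ | 1 ≤ j ∧ dEval p j z ≠ 0}

/-- `A(z) = max {|p^{(j)}(z)|/j! : j = 0, …, n}`, where `n` is the degree of `p`. -/
def Amax (p : Polynomial ℂ) (z : ℂ) : ℝ :=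
  (Finset.range (p.natDegree + 1)).sup' Finset.nonempty_range_add_one
    (fun j => ‖dEval p j z‖ / (Nat.factorial j))

/-- `u_m = (1/m!) · p(z) · conj(p^{(m)}(z))`. -/
def uPar (p : Polynomial ℂ) (m : ℕ) (z : ℂ) : ℂ :=
  (1 / (Nat.factorial m : ℂ)) * p.eval z * (starRingEnd ℂ) (dEval p m z)

/-- `γ = 2 · Re(u_m^(m-1))`. -/
def gammaPar (p : Polynomial ℂ) (m : ℕ) (z : ℂ) : ℝ :=
  2 * ((uPar p m z) ^ (m - 1)).re

/-- `δ = -2 · Im(u_m^(m-1))`. -/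
def deltaPar (p : Polynomial ℂ) (m : ℕ) (z : ℂ) : ℝ :=
  -2 * ((uPar p m z) ^ (m - 1)).im

/-- `c_m = max {|γ|, |δ|}`. -/
def cPar (p : Polynomial ℂ) (m : ℕ) (z : ℂ) : ℝ :=
  max |gammaPar p m z| |deltaPar p m z|

/-- The angle `θ`: `0` if `c = |γ|, γ < 0`; `π/m` if `c = |γ|, γ > 0`;
`π/(2m)` if `c = |δ|, δ < 0`; `3π/(2m)` if `c = |δ|, δ > 0`. -/
def thetaPar (p : Polynomial ℂ) (m : ℕ) (z : ℂ) : ℝ :=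
  if cPar p m z = |gammaPar p m z| then
    if gammaPar p m z < 0 then 0 else Real.pi / m
  else
    if deltaPar p m z < 0 then Real.pi / (2 * m) else 3 * Real.pi / (2 * m)

/-- `C_m = c_m · |u_m|^(2-m) / (6 · A(z)²)`. -/
def CPar (p : Polynomial ℂ) (m : ℕ) (z : ℂ) : ℝ :=
  cPar p m z * ‖uPar p m z‖ ^ ((2 : ℤ) - (m : ℤ)) / (6 * (Amax p z) ^ 2)

/-- The Robust Newton iterate with prescribed index `m`:
`z + (C_m/3) · (u_m/|u_m|) · e^(iθ)`. -/
def rniWith (p : Polynomial ℂ) (m : ℕ) (z : ℂ) : ℂ :=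
  z + (↑(CPar p m z / 3) : ℂ) * (uPar p m z / (↑(‖uPar p m z‖) : ℂ)) *
    Complex.exp ((↑(thetaPar p m z) : ℂ) * Complex.I)

/-- The Robust Newton iterate `N̂_p(z)`. -/
def RN (p : Polynomial ℂ) (z : ℂ) : ℂ := rniWith p (kIndex p z) z

/-- The RNM orbit of the seed `z₀`: `z_{t+1} = N̂_p(z_t)` when `p(z_t) ≠ 0`,
and `z_{t+1} = z_t` when `p(z_t) = 0`. -/
def rnmOrbit (p : Polynomial ℂ) (z₀ : ℂ) : ℕ → ℂ
  | 0 => z₀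
  | t + 1 =>
      if p.eval (rnmOrbit p z₀ t) = 0 then rnmOrbit p z₀ t
      else RN p (rnmOrbit p z₀ t)

lemma mr_taylor_coeff (p : Polynomial ℂ) (z : ℂ) (j : ℕ) :
    (Nat.factorial j : ℂ) * (taylor z p).coeff j = dEval p j z := by
  rw [taylor_coeff, dEval, ← Polynomial.factorial_smul_hasseDeriv]
  simp [nsmul_eq_mul]

/-- the rotated main term -/
lemma mr_main (p : Polynomial ℂ) (m : ℕ) (hm : 1 ≤ m) (z : ℂ) :
    2 * ((uPar p m z) ^ (m - 1) *
      Complex.exp ((↑(thetaPar p m z) : ℂ) * Complex.I) ^ m).re = -(cPar p m z) := by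
  have hm0 : (m : ℂ) ≠ 0 := by exact_mod_cast (by omega : m ≠ 0)
  rw [← Complex.exp_nat_mul]
  unfold thetaPar
  split_ifs with h1 h2 h2
  · rw [h1, abs_of_neg h2]
    simp [gammaPar]
  · rw [h1, abs_of_nonneg (not_lt.mp h2)]
    have : (m : ℂ) * (((Real.pi / m : ℝ) : ℂ) * Complex.I) = Real.pi * Complex.I := by
      push_cast; field_simp
    rw [this, Complex.exp_pi_mul_I]
    simp [gammaPar]
  all_goals
    have h3 : cPar p m z = |deltaPar p m z| := by
      rcases max_choice |gammaPar p m z| |deltaPar p m z| with h | h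
      · exact absurd h h1
      · exact h
  · rw [h3, abs_of_neg h2]
    have : (m : ℂ) * (((Real.pi / (2 * m) : ℝ) : ℂ) * Complex.I) = Real.pi / 2 * Complex.I := by
      push_cast; field_simp
    rw [this, Complex.exp_pi_div_two_mul_I]
    simp [deltaPar]
  · rw [h3, abs_of_nonneg (not_lt.mp h2)]
    have : (m : ℂ) * (((3 * Real.pi / (2 * m) : ℝ) : ℂ) * Complex.I)
        = Real.pi * Complex.I + Real.pi / 2 * Complex.I := by
      push_cast; field_simp; ring
    rw [this, Complex.exp_add, Complex.exp_pi_mul_I, Complex.exp_pi_div_two_mul_I]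
    simp [deltaPar]

lemma mr_c_upper (p : Polynomial ℂ) (m : ℕ) (z : ℂ) :
    cPar p m z ≤ 2 * ‖uPar p m z‖ ^ (m - 1) := by
  rw [← norm_pow]
  unfold cPar gammaPar deltaPar
  apply max_le
  · rw [abs_mul]; simpa using Complex.abs_re_le_norm (uPar p m z ^ (m - 1))
  · rw [abs_mul]; simpa using Complex.abs_im_le_norm (uPar p m z ^ (m - 1))

lemma mr_c_lower (p : Polynomial ℂ) (m : ℕ) (z : ℂ) :
    ‖uPar p m z‖ ^ (m - 1) ≤ cPar p m z := by
  rw [← norm_pow]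
  have h1 : |gammaPar p m z| ≤ cPar p m z := le_max_left _ _
  have h2 : |deltaPar p m z| ≤ cPar p m z := le_max_right _ _
  unfold gammaPar at h1
  unfold deltaPar at h2
  rw [abs_mul] at h1 h2
  have := Complex.norm_le_abs_re_add_abs_im (uPar p m z ^ (m - 1))
  norm_num at h1 h2
  linarith

/-- remainder bound -/
lemma mr_expand (q : Polynomial ℂ) (A r : ℝ) (k : ℕ) (h : ℂ) (hk : 1 ≤ k)
    (hkn : k ≤ q.natDegree) (hz : ∀ j, 1 ≤ j → j < k → q.coeff j = 0)
    (hA : ∀ j, ‖q.coeff j‖ ≤ A) (hr : ‖h‖ = r) (hr9 : r ≤ 1 / 9) :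
    ‖q.eval h - q.coeff 0 - q.coeff k * h ^ k‖ ≤ 9 / 8 * A * r ^ (k + 1) := by
  have hr0 : 0 ≤ r := hr ▸ norm_nonneg h
  have hA0 : 0 ≤ A := (norm_nonneg _).trans (hA 0)
  have e : q.eval h - q.coeff 0 - q.coeff k * h ^ k
      = ∑ j ∈ Finset.Ico (k + 1) (q.natDegree + 1), q.coeff j * h ^ j := by
    rw [eval_eq_sum_range, Finset.range_eq_Ico,
      ← Finset.sum_Ico_consecutive _ (Nat.zero_le (k + 1)) (by omega : k + 1 ≤ q.natDegree + 1),
      ← Finset.range_eq_Ico, Finset.sum_range_succ]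
    have : ∑ j ∈ Finset.range k, q.coeff j * h ^ j = q.coeff 0 := by
      rw [Finset.sum_eq_single 0]
      · simp
      · intro b hb hb0
        rw [hz b (by omega) (Finset.mem_range.mp hb), zero_mul]
      · intro h0; exact absurd (Finset.mem_range.mpr hk) h0
    rw [this]; ring
  rw [e]
  calc _ ≤ ∑ j ∈ Finset.Ico (k + 1) (q.natDegree + 1), A * r ^ j := by
        apply norm_sum_le_of_le
        intro j _
        rw [norm_mul, norm_pow, hr]
        exact mul_le_mul_of_nonneg_right (hA j) (by positivity)
    _ = A * ∑ j ∈ Finset.Ico (k + 1) (q.natDegree + 1), r ^ j := by rw [Finset.mul_sum]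
    _ ≤ A * (r ^ (k + 1) / (1 - r)) := by
        gcongr
        exact geom_sum_Ico_le_of_lt_one hr0 (by linarith)
    _ ≤ A * (r ^ (k + 1) * (9 / 8)) := by
        gcongr
        rw [div_le_iff₀ (by linarith)]
        have : 0 ≤ r ^ (k + 1) := by positivity
        nlinarith
    _ = _ := by ring

theorem modulus_reduction (p : Polynomial ℂ) (hdeg : 2 ≤ p.natDegree)
    (z₀ : ℂ) (hp : p.eval z₀ ≠ 0) :
    ‖p.eval (RN p z₀)‖ ^ 2 - ‖p.eval z₀‖ ^ 2 ≤
      -(9 * (Amax p z₀) ^ 2 * (CPar p (kIndex p z₀) z₀ / 3) ^ (kIndex p z₀ + 1)) ∧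
    -(9 * (Amax p z₀) ^ 2 * (CPar p (kIndex p z₀) z₀ / 3) ^ (kIndex p z₀ + 1)) ≤
      -(1 / 2 * ‖uPar p (kIndex p z₀) z₀‖ ^ (kIndex p z₀ + 1) /
        (18 ^ (kIndex p z₀) * (Amax p z₀) ^ (2 * kIndex p z₀))) := by
  have hf : ∀ j : ℕ, (Nat.factorial j : ℂ) ≠ 0 := fun j => by
    exact_mod_cast Nat.factorial_ne_zero j
  have hnS : p.natDegree ∈ {j : ℕ | 1 ≤ j ∧ dEval p j z₀ ≠ 0} := by
    refine ⟨by omega, ?_⟩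
    rw [← mr_taylor_coeff]
    refine mul_ne_zero (hf _) ?_
    rw [← natDegree_taylor p z₀]
    rw [coeff_natDegree, Ne, leadingCoeff_eq_zero]
    intro h0
    have := natDegree_taylor p z₀
    rw [h0] at this
    simp at this
    omega
  have hkS : kIndex p z₀ ∈ {j : ℕ | 1 ≤ j ∧ dEval p j z₀ ≠ 0} := Nat.sInf_mem ⟨_, hnS⟩
  have hkn : kIndex p z₀ ≤ p.natDegree := Nat.sInf_le hnS
  have hkmin : ∀ j, 1 ≤ j → j < kIndex p z₀ → dEval p j z₀ = 0 := by
    intro j h1 h2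
    by_contra h3
    exact absurd (Nat.sInf_le (show j ∈ {j : ℕ | 1 ≤ j ∧ dEval p j z₀ ≠ 0} from ⟨h1, h3⟩))
      (not_le.mpr h2)
  have hRN : RN p z₀ = rniWith p (kIndex p z₀) z₀ := rfl
  rw [hRN]
  generalize kIndex p z₀ = k at *
  obtain ⟨hk1, hk⟩ := hkS
  set q := taylor z₀ p with hq
  have hqn : q.natDegree = p.natDegree := natDegree_taylor p z₀
  have hcoef : ∀ j, q.coeff j = dEval p j z₀ / (Nat.factorial j : ℂ) := fun j => by
    rw [← mr_taylor_coeff, mul_div_cancel_left₀ _ (hf j)]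
  have hA : ∀ j, ‖q.coeff j‖ ≤ Amax p z₀ := by
    have hA' : ∀ j ≤ p.natDegree, ‖q.coeff j‖ ≤ Amax p z₀ := by
      intro j hj
      rw [hcoef, norm_div, Complex.norm_natCast]
      exact Finset.le_sup' (fun j => ‖dEval p j z₀‖ / (Nat.factorial j))
        (Finset.mem_range.mpr (by omega))
    intro j
    by_cases hj : j ≤ p.natDegree
    · exact hA' j hj
    · rw [coeff_eq_zero_of_natDegree_lt (by omega), norm_zero]
      exact (norm_nonneg _).trans (hA' 0 (by omega))
  have h00 : q.coeff 0 = p.eval z₀ := by rw [hq, taylor_coeff_zero]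
  have hu : uPar p k z₀ = q.coeff 0 * (starRingEnd ℂ) (q.coeff k) := by
    rw [h00, hcoef k, uPar, map_div₀, Complex.conj_natCast]
    ring
  have hak : q.coeff k ≠ 0 := by rw [hcoef]; exact div_ne_zero hk (hf k)
  have hu0 : uPar p k z₀ ≠ 0 := by
    rw [hu]; exact mul_ne_zero (h00 ▸ hp) ((_root_.map_ne_zero _).mpr hak)
  have hApos : 0 < Amax p z₀ := (norm_pos_iff.mpr hak).trans_le (hA k)
  have hz : ∀ j, 1 ≤ j → j < k → q.coeff j = 0 := fun j h1 h2 => by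
    rw [hcoef, hkmin j h1 h2, zero_div]
  have hmain := mr_main p k hk1 z₀
  have hcu := mr_c_upper p k z₀
  have hcl := mr_c_lower p k z₀
  have heq : p.eval (rniWith p k z₀) = q.eval ((↑(CPar p k z₀ / 3) : ℂ) *
      (uPar p k z₀ / (↑(‖uPar p k z₀‖) : ℂ)) *
      Complex.exp ((↑(thetaPar p k z₀) : ℂ) * Complex.I)) := by
    rw [hq, taylor_eval, rniWith, add_comm]
  rw [heq, ← h00]
  have hE : ‖Complex.exp ((↑(thetaPar p k z₀) : ℂ) * Complex.I)‖ = 1 :=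
    Complex.norm_exp_ofReal_mul_I _
  have hC : CPar p k z₀ = cPar p k z₀ * ‖uPar p k z₀‖ ^ ((2 : ℤ) - (k : ℤ)) /
    (6 * (Amax p z₀) ^ 2) := rfl
  generalize Complex.exp ((↑(thetaPar p k z₀) : ℂ) * Complex.I) = E at *
  generalize Amax p z₀ = A at *
  generalize cPar p k z₀ = c at *
  generalize CPar p k z₀ = C at *
  generalize uPar p k z₀ = u at *
  have hupos : 0 < ‖u‖ := norm_pos_iff.mpr hu0
  have huA : ‖u‖ ≤ A ^ 2 := by
    rw [hu, norm_mul, Complex.norm_conj, sq]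
    exact mul_le_mul (hA 0) (hA k) (norm_nonneg _) hApos.le
  obtain ⟨m, rfl⟩ : ∃ m, k = m + 1 := ⟨k - 1, by omega⟩
  simp only [Nat.add_sub_cancel] at *
  have hzp : ‖u‖ ^ ((2 : ℤ) - ((m + 1 : ℕ) : ℤ)) = ‖u‖ / ‖u‖ ^ m := by
    rw [show (2 : ℤ) - ((m + 1 : ℕ) : ℤ) = 1 - (m : ℤ) by push_cast; ring,
      zpow_sub₀ hupos.ne', zpow_one, zpow_natCast]
  rw [hzp] at hC
  have hum : 0 < ‖u‖ ^ m := by positivity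
  -- t = c / |u|^m ∈ [1,2]
  obtain ⟨t, ht⟩ : ∃ t, t = c / ‖u‖ ^ m := ⟨_, rfl⟩
  have ht1 : 1 ≤ t := by rw [ht, le_div_iff₀ hum]; linarith
  have ht2 : t ≤ 2 := by rw [ht, div_le_iff₀ hum]; linarith
  have hct : c = t * ‖u‖ ^ m := by rw [ht]; field_simp
  obtain ⟨r, hr⟩ : ∃ r, r = C / 3 := ⟨_, rfl⟩
  have hrt : r = t * ‖u‖ / (18 * A ^ 2) := by
    rw [hr, hC, hct]; field_simp; norm_num
  rw [← hr]
  have hr0 : 0 < r := by rw [hrt]; positivity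
  have hr9 : r ≤ 1 / 9 := by
    rw [hrt, div_le_iff₀ (by positivity)]; nlinarith
  constructor
  · set h : ℂ := (r : ℂ) * (u / (‖u‖ : ℂ)) * E with hh
    have hun : (‖u‖ : ℂ) ≠ 0 := by exact_mod_cast hupos.ne'
    have hnh : ‖h‖ = r := by
      rw [hh, norm_mul, norm_mul, norm_div, hE, Complex.norm_real, Complex.norm_real,
        Real.norm_of_nonneg hr0.le, Real.norm_of_nonneg hupos.le, div_self hupos.ne']
      ring
    have hR := mr_expand q A r (m + 1) h hk1 (by omega) hz hA hnh hr9
    set a := q.coeff 0 with ha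
    set b := q.coeff (m + 1) with hb
    obtain ⟨R, hRd⟩ : ∃ R, R = q.eval h - a - b * h ^ (m + 1) := ⟨_, rfl⟩
    rw [← hRd] at hR
    have hev : q.eval h = a + (b * h ^ (m + 1) + R) := by rw [hRd]; ring
    rw [hev]
    have hkey : (starRingEnd ℂ a * (b * h ^ (m + 1)))
        = ((r ^ (m + 1) * (‖u‖ / ‖u‖ ^ m) : ℝ) : ℂ) * (u ^ m * E ^ (m + 1)) := by
      have h1 : starRingEnd ℂ a * b = starRingEnd ℂ u := by
        rw [hu]; simp
      have h2 : starRingEnd ℂ u * u = (‖u‖ : ℂ) ^ 2 := Complex.conj_mul' u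
      calc _ = (starRingEnd ℂ a * b) * h ^ (m + 1) := by ring
        _ = (starRingEnd ℂ u * u) * (r ^ (m + 1) * u ^ m * E ^ (m + 1) / (‖u‖ : ℂ) ^ (m + 1)) := by
          rw [h1, hh, mul_pow, mul_pow, div_pow]; ring
        _ = _ := by
          rw [h2]; push_cast; field_simp; ring
    have hkre : 2 * (starRingEnd ℂ a * (b * h ^ (m + 1))).re = - (18 * A ^ 2 * r ^ (m + 2)) := by
      rw [hkey, Complex.re_ofReal_mul]
      calc _ = r ^ (m + 1) * (‖u‖ / ‖u‖ ^ m) * (2 * (u ^ m * E ^ (m + 1)).re) := by ring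
        _ = - (r ^ (m + 1) * (t * ‖u‖)) := by
          rw [hmain, hct]; field_simp
        _ = _ := by
          have : t * ‖u‖ = 18 * A ^ 2 * r := by rw [hrt]; field_simp
          rw [this]; ring
    have hsq : ∀ x y : ℂ, ‖x + y‖ ^ 2 - ‖x‖ ^ 2 = 2 * (starRingEnd ℂ x * y).re + ‖y‖ ^ 2 := by
      intro x y
      simp only [← Complex.normSq_eq_norm_sq, Complex.normSq_apply]
      simp
      ring
    rw [hsq, mul_add, Complex.add_re]
    have hre : (starRingEnd ℂ a * R).re ≤ A * (9 / 8 * A * r ^ (m + 2)) := by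
      refine (Complex.re_le_norm _).trans ?_
      rw [norm_mul, Complex.norm_conj]
      exact mul_le_mul (hA 0) hR (norm_nonneg _) hApos.le
    have hrp : 0 < r ^ (m + 1) := by positivity
    have hn : ‖b * h ^ (m + 1) + R‖ ≤ 9 / 8 * (A * r ^ (m + 1)) := by
      refine (norm_add_le _ _).trans ?_
      rw [norm_mul, norm_pow, hnh]
      have h1 : ‖b‖ * r ^ (m + 1) ≤ A * r ^ (m + 1) :=
        mul_le_mul_of_nonneg_right (hA _) hrp.le
      have h2 : 9 / 8 * A * r ^ (m + 1 + 1) ≤ 1 / 8 * (A * r ^ (m + 1)) := by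
        have : 0 < A * r ^ (m + 1) := by positivity
        rw [pow_succ r (m + 1)]
        nlinarith
      linarith
    have hn2 : ‖b * h ^ (m + 1) + R‖ ^ 2 ≤ 81 / 64 * (A ^ 2 * r ^ (m + 2)) := by
      calc _ ≤ (9 / 8 * (A * r ^ (m + 1))) ^ 2 := by gcongr
        _ = 81 / 64 * (A ^ 2 * r ^ (m + 2)) * r ^ m := by ring
        _ ≤ 81 / 64 * (A ^ 2 * r ^ (m + 2)) * 1 := by
          gcongr
          exact pow_le_one₀ hr0.le (by linarith)
        _ = _ := by ring
    have hpos : 0 < A ^ 2 * r ^ (m + 2) := by positivity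
    have e2 : m + 1 + 1 = m + 2 := rfl
    rw [e2]
    nlinarith
  · apply neg_le_neg
    have hrl : ‖u‖ / (18 * A ^ 2) ≤ r := by
      rw [hrt]
      gcongr
      nlinarith
    calc _ = 9 * A ^ 2 * (‖u‖ / (18 * A ^ 2)) ^ (m + 1 + 1) := by
          rw [div_pow, mul_pow, ← pow_mul, pow_succ (18 : ℝ) (m + 1),
            show 2 * (m + 1 + 1) = 2 * (m + 1) + 2 by ring, pow_add A]
          field_simp
          norm_num
      _ ≤ _ := by gcongr
end
end

section
/- Let p be a polynomial with complex coefficients of degree n ≥ 2 and F(z) = |p(z)|². Let z₀ ∈ ℂ with p(z₀) ≠ 0 and p'(z₀) ≠ 0 (so k(z₀) = 1), and let z₁ = z₀ − p(z₀)·conj(p'(z₀))/(9·A(z₀)²). Then F(z₁) − F(z₀) ≤ −|p(z₀)·p'(z₀)|²/(9·A(z₀)²). -/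
open Polynomial Filter Topology
open scoped Classical

noncomputable section

lemma taylor_coeff_dEval (p : Polynomial ℂ) (z : ℂ) (j : ℕ) :
    dEval p j z = (Nat.factorial j : ℂ) * (taylor z p).coeff j := by
  unfold dEval
  rw [taylor_coeff, ← Polynomial.factorial_smul_hasseDeriv]
  simp [nsmul_eq_mul]

lemma norm_coeff_le_Amax (p : Polynomial ℂ) (z : ℂ) (j : ℕ) (hj : j < p.natDegree + 1) :
    ‖(taylor z p).coeff j‖ ≤ Amax p z := by
  have h := Finset.le_sup' (fun j => ‖dEval p j z‖ / (Nat.factorial j : ℝ))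
    (Finset.mem_range.mpr hj)
  have hf : (0 : ℝ) < (Nat.factorial j : ℝ) := by exact_mod_cast Nat.factorial_pos j
  have e : ‖dEval p j z‖ / (Nat.factorial j : ℝ) = ‖(taylor z p).coeff j‖ := by
    rw [taylor_coeff_dEval, norm_mul, Complex.norm_natCast]
    field_simp
  unfold Amax
  simp only [e] at h
  simpa only [e] using h

lemma remainder_bound (p : Polynomial ℂ) (hdeg : 2 ≤ p.natDegree) (z h : ℂ)
    (hh : ‖h‖ ≤ 1 / 9) :
    ‖p.eval (z + h) - (p.eval z + p.derivative.eval z * h)‖ ≤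
      Amax p z * (9 / 8 * ‖h‖ ^ 2) := by
  obtain ⟨m, hm⟩ : ∃ m, p.natDegree + 1 = m + 2 := ⟨p.natDegree - 1, by omega⟩
  have e1 : p.eval (z + h) = (taylor z p).eval h := by
    rw [taylor_eval, add_comm]
  have e2 : p.eval (z + h) - (p.eval z + p.derivative.eval z * h) =
      ∑ i ∈ Finset.range m, (taylor z p).coeff (i + 2) * h ^ (i + 2) := by
    rw [e1, eval_eq_sum_range, natDegree_taylor, hm, Finset.sum_range_succ',
      Finset.sum_range_succ']
    simp only [taylor_coeff_zero, taylor_coeff_one, zero_add, pow_zero, pow_one, mul_one,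
      add_assoc, Nat.reduceAdd]
    ring
  have hA : 0 ≤ Amax p z := (norm_nonneg _).trans (norm_coeff_le_Amax p z 0 (by omega))
  have hg : ∑ i ∈ Finset.range m, ‖h‖ ^ i ≤ 9 / 8 := by
    have h1 := geom_sum_mul_neg ‖h‖ m
    have h2 : 0 ≤ ‖h‖ ^ m := by positivity
    have h3 : 0 ≤ ∑ i ∈ Finset.range m, ‖h‖ ^ i := by positivity
    nlinarith
  rw [e2]
  calc _ ≤ ∑ i ∈ Finset.range m, ‖(taylor z p).coeff (i + 2) * h ^ (i + 2)‖ := norm_sum_le _ _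
    _ ≤ ∑ i ∈ Finset.range m, Amax p z * ‖h‖ ^ 2 * ‖h‖ ^ i := by
        refine Finset.sum_le_sum fun i hi => ?_
        rw [Finset.mem_range] at hi
        have := norm_coeff_le_Amax p z (i + 2) (by omega)
        rw [norm_mul, norm_pow, mul_assoc, ← pow_add, add_comm 2 i]
        gcongr
    _ = Amax p z * ‖h‖ ^ 2 * ∑ i ∈ Finset.range m, ‖h‖ ^ i := by rw [Finset.mul_sum]
    _ ≤ Amax p z * ‖h‖ ^ 2 * (9 / 8) := by gcongr
    _ = _ := by ring

/-- When `p(z₀) ≠ 0` and `p'(z₀) ≠ 0` (so `k(z₀) = 1`), the Robust Newton iterate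
`z₁ = z₀ − p(z₀)·conj(p'(z₀))/(9·A(z₀)²)` satisfies
`F(z₁) − F(z₀) ≤ −|p(z₀)·p'(z₀)|²/(9·A(z₀)²)`. -/
theorem modulus_reduction_k_eq_one (p : Polynomial ℂ) (hdeg : 2 ≤ p.natDegree)
    (z₀ : ℂ) (hp : p.eval z₀ ≠ 0) (hp' : p.derivative.eval z₀ ≠ 0) :
    ‖p.eval (z₀ - p.eval z₀ * (starRingEnd ℂ) (p.derivative.eval z₀) /
        ((9 * (Amax p z₀) ^ 2 : ℝ) : ℂ))‖ ^ 2 - ‖p.eval z₀‖ ^ 2 ≤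
      -(‖p.eval z₀ * p.derivative.eval z₀‖ ^ 2 / (9 * (Amax p z₀) ^ 2)) := by
  have ha := norm_coeff_le_Amax p z₀ 0 (by omega)
  have hb := norm_coeff_le_Amax p z₀ 1 (by omega)
  rw [taylor_coeff_zero] at ha
  rw [taylor_coeff_one] at hb
  have hA : 0 < Amax p z₀ := (norm_pos_iff.mpr hp).trans_le ha
  have hR := remainder_bound p hdeg z₀ (-(p.eval z₀ * (starRingEnd ℂ) (p.derivative.eval z₀) /
        ((9 * (Amax p z₀) ^ 2 : ℝ) : ℂ)))
  rw [← sub_eq_add_neg] at hR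
  generalize Amax p z₀ = A at *
  generalize p.eval z₀ = u at *
  generalize p.derivative.eval z₀ = v at *
  generalize p.eval (z₀ - _) = w at *
  have hn : ‖-(u * (starRingEnd ℂ) v / ((9 * A ^ 2 : ℝ) : ℂ))‖ = ‖u‖ * ‖v‖ / (9 * A ^ 2) := by
    rw [norm_neg, norm_div, norm_mul, RCLike.norm_conj, Complex.norm_real, Real.norm_of_nonneg]
    positivity
  rw [hn] at hR
  have hlin : u + v * -(u * (starRingEnd ℂ) v / ((9 * A ^ 2 : ℝ) : ℂ)) =
      u * ((1 - ‖v‖ ^ 2 / (9 * A ^ 2) : ℝ) : ℂ) := by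
    have := Complex.mul_conj' v
    push_cast
    rw [← this]
    ring
  rw [hlin] at hR
  obtain ⟨a, hae⟩ : ∃ a, ‖u‖ = a * A := ⟨‖u‖ / A, by field_simp⟩
  obtain ⟨b, hbe⟩ : ∃ b, ‖v‖ = b * A := ⟨‖v‖ / A, by field_simp⟩
  have ha0 : 0 ≤ a := by
    by_contra! hc
    nlinarith [norm_nonneg u]
  have hb0 : 0 ≤ b := by
    by_contra! hc
    nlinarith [norm_nonneg v]
  have ha1 : a ≤ 1 := by
    by_contra! hc
    nlinarith
  have hb1 : b ≤ 1 := by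
    by_contra! hc
    nlinarith
  have hb2 : b ^ 2 ≤ 1 := by nlinarith
  have et : ‖u‖ * ‖v‖ / (9 * A ^ 2) = a * b / 9 := by
    rw [hae, hbe]; field_simp
  have ev : ‖v‖ ^ 2 / (9 * A ^ 2) = b ^ 2 / 9 := by
    rw [hbe]; field_simp
  rw [et, ev] at hR
  have hR := hR (by nlinarith)
  have hw : ‖w‖ ≤ a * A * (1 - 7 / 72 * b ^ 2) := by
    have h1 : ‖w‖ ≤ ‖w - u * ((1 - b ^ 2 / 9 : ℝ) : ℂ)‖ + ‖u * ((1 - b ^ 2 / 9 : ℝ) : ℂ)‖ := by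
      exact norm_le_norm_sub_add _ _
    rw [norm_mul u, Complex.norm_real, Real.norm_of_nonneg (by linarith), hae] at h1
    have h2 : A * a * b ^ 2 * a ≤ A * a * b ^ 2 * 1 := by gcongr
    nlinarith
  have hw2 : ‖w‖ ^ 2 ≤ (a * A * (1 - 7 / 72 * b ^ 2)) ^ 2 := by gcongr
  have er : ‖u * v‖ ^ 2 / (9 * A ^ 2) = (a * A) ^ 2 * (b ^ 2 / 9) := by
    rw [norm_mul, hae, hbe]; field_simp
  rw [er, hae]
  have h3 : (1 - 7 / 72 * b ^ 2) ^ 2 ≤ 1 - b ^ 2 / 9 := by nlinarith [sq_nonneg b]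
  have h4 := mul_le_mul_of_nonneg_left h3 (sq_nonneg (a * A))
  nlinarith
end
end

section
/- Auxiliary Lemma for Selection of Descent Direction: Let u ∈ ℂ be nonzero and k a natural number with k ≥ 1. Define G_k(z) = conj(u)·z^k + u·conj(z)^k, γ = 2·Re(u^(k−1)), δ = −2·Im(u^(k−1)), c = max{|γ|, |δ|}, and let θ = 0 if c = |γ| and γ < 0, θ = π/k if c = |γ| and γ > 0, θ = π/(2k) if c = |δ| and δ < 0, θ = 3π/(2k) if c = |δ| and δ > 0. Then c > 0 and for every real α > 0, G_k(α·u·e^(iθ)) = −c·|u|²·α^k, which is strictly negative. -/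
open scoped Classical

/-- **Auxiliary Lemma for Selection of Descent Direction.** For `u ≠ 0` and `k ≥ 1`, with
`G_k(z) = conj(u)·z^k + u·conj(z)^k`, `γ = 2·Re(u^(k−1))`, `δ = −2·Im(u^(k−1))`,
`c = max {|γ|, |δ|}` and the angle `θ` chosen as in the Robust Newton method, we have
`c > 0` and `G_k(α·u·e^(iθ)) = −c·|u|²·α^k < 0` for every `α > 0`. -/
theorem descent_direction (u : ℂ) (hu : u ≠ 0) (k : ℕ) (hk : 1 ≤ k)
    (γ δ c θ : ℝ)
    (hγ : γ = 2 * (u ^ (k - 1)).re)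
    (hδ : δ = -2 * (u ^ (k - 1)).im)
    (hc : c = max |γ| |δ|)
    (hθ : θ = if c = |γ| then (if γ < 0 then 0 else Real.pi / k)
          else (if δ < 0 then Real.pi / (2 * k) else 3 * Real.pi / (2 * k))) :
    0 < c ∧
    ∀ α : ℝ, 0 < α →
      (starRingEnd ℂ) u * (↑α * u * Complex.exp (↑θ * Complex.I)) ^ k +
        u * ((starRingEnd ℂ) (↑α * u * Complex.exp (↑θ * Complex.I))) ^ k =
        ((-(c * ‖u‖ ^ 2 * α ^ k) : ℝ) : ℂ) ∧
      -(c * ‖u‖ ^ 2 * α ^ k) < 0 := by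
  have hk0 : (k : ℂ) ≠ 0 := by
    exact_mod_cast (by omega : k ≠ 0)
  have hw : u ^ (k - 1) ≠ 0 := pow_ne_zero _ hu
  have hcpos : 0 < c := by
    rw [hc]
    by_contra hcon
    have h1 : |γ| ≤ 0 := le_trans (le_max_left _ _) (not_lt.mp hcon)
    have h2 : |δ| ≤ 0 := le_trans (le_max_right _ _) (not_lt.mp hcon)
    have h3 := abs_nonpos_iff.mp h1
    have h4 := abs_nonpos_iff.mp h2
    apply hw
    apply Complex.ext
    · simp only [Complex.zero_re]; linarith
    · simp only [Complex.zero_im]; linarith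
  refine ⟨hcpos, fun α hα => ⟨?_, ?_⟩⟩
  swap
  · have : 0 < ‖u‖ := norm_pos_iff.mpr hu
    have : 0 < c * ‖u‖ ^ 2 * α ^ k := by positivity
    linarith
  have hE : (u ^ (k - 1) * Complex.exp (θ * Complex.I) ^ k).re * 2 = -c := by
    rw [← Complex.exp_nat_mul]
    by_cases h1 : c = |γ|
    · rw [if_pos h1] at hθ
      by_cases h2 : γ < 0
      · rw [if_pos h2] at hθ
        rw [abs_of_neg h2] at h1
        rw [hθ]
        simp
        linarith
      · rw [if_neg h2] at hθ
        rw [abs_of_nonneg (not_lt.mp h2)] at h1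
        have : (k : ℂ) * (θ * Complex.I) = Real.pi * Complex.I := by
          rw [hθ]; push_cast; field_simp
        rw [this, Complex.exp_pi_mul_I]
        simp
        linarith
    · rw [if_neg h1] at hθ
      have h3 : c = |δ| := by
        rcases max_choice |γ| |δ| with h | h
        · exact absurd (hc.trans h) h1
        · exact hc.trans h
      by_cases h2 : δ < 0
      · rw [if_pos h2] at hθ
        rw [abs_of_neg h2] at h3
        have : (k : ℂ) * (θ * Complex.I) = Real.pi / 2 * Complex.I := by
          rw [hθ]; push_cast; field_simp
        rw [this, Complex.exp_pi_div_two_mul_I]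
        simp
        linarith
      · rw [if_neg h2] at hθ
        rw [abs_of_nonneg (not_lt.mp h2)] at h3
        have : (k : ℂ) * (θ * Complex.I) = Real.pi * Complex.I + Real.pi / 2 * Complex.I := by
          rw [hθ]; push_cast; field_simp; ring
        rw [this, Complex.exp_add, Complex.exp_pi_mul_I, Complex.exp_pi_div_two_mul_I]
        simp
        linarith
  have hN : (starRingEnd ℂ) u * u = ((‖u‖ ^ 2 : ℝ) : ℂ) := by
    rw [Complex.conj_mul']; push_cast; rfl
  have hA := Complex.add_conj (u ^ (k - 1) * Complex.exp (θ * Complex.I) ^ k)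
  rw [mul_comm 2, hE] at hA
  have hp : u ^ k = u ^ (k - 1) * u := by rw [← pow_succ]; congr 1; omega
  have hp2 : (starRingEnd ℂ) u ^ k = (starRingEnd ℂ) u ^ (k - 1) * (starRingEnd ℂ) u := by
    rw [← pow_succ]; congr 1; omega
  have hR : ((-(c * ‖u‖ ^ 2 * α ^ k) : ℝ) : ℂ)
      = ((-c : ℝ) : ℂ) * ((‖u‖ ^ 2 : ℝ) : ℂ) * (α : ℂ) ^ k := by push_cast; ring
  rw [hR, ← hA, ← hN]
  simp only [map_mul, map_pow, mul_pow, Complex.conj_ofReal]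
  rw [hp, hp2]
  ring
end

section
/- Complexity of RNM: Let p be a polynomial with complex coefficients of degree n ≥ 2, let ε ∈ (0,1), and let z₀ ∈ ℂ be a seed with |p(z₀)| > ε. Let S₀ = {z ∈ ℂ : |p(z)| ≤ |p(z₀)|} and A₀ = max{|p^{(j)}(z)|/j! : j = 0,…,n, z ∈ S₀}. Then there exists an iteration index t of the RNM orbit of z₀ with t ≤ 9·A₀²·|p(z₀)|²/ε² such that |p(z_t)| ≤ ε or |p(z_t)·p'(z_t)| ≤ ε. -/
open Polynomial Filter Topology
open scoped Classical

noncomputable section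

lemma key_abs (n : ℕ) (a : ℕ → ℂ) (A : ℝ) (hA : 0 < A) (ha : ∀ j < n + 2, ‖a j‖ ≤ A) (h1 : 1 ≤ n)
    (h : ℂ) (hh : h = -(a 0 * (starRingEnd ℂ) (a 1)) / (9 * (A : ℂ) ^ 2)) :
    ‖∑ j ∈ Finset.range (n + 2), a j * h ^ j‖ ^ 2 ≤ ‖a 0‖ ^ 2 - ‖a 0 * a 1‖ ^ 2 / (9 * A ^ 2) := by
  have hA' : (A : ℂ) ≠ 0 := by exact_mod_cast hA.ne'
  have h0 := ha 0 (by omega)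
  have h1' := ha 1 (by omega)
  set s := ‖a 0‖ with hs
  set q := ‖a 1‖ with hq
  have hs0 : 0 ≤ s := norm_nonneg _
  have hq0 : 0 ≤ q := norm_nonneg _
  have hr : ‖h‖ = s * q / (9 * A ^ 2) := by
    rw [hh, norm_div, norm_neg, norm_mul, RCLike.norm_conj, norm_mul, norm_pow]
    simp [abs_of_pos hA, hs, hq]
  have hr9 : ‖h‖ ≤ 1 / 9 := by
    rw [hr, div_le_div_iff₀ (by positivity) (by norm_num)]
    nlinarith [mul_le_mul h0 h1' hq0 hA.le]
  have hgeo : ∀ m : ℕ, ∑ j ∈ Finset.range m, ‖h‖ ^ j ≤ 9 / 8 := by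
    intro m
    have e := geom_sum_mul ‖h‖ m
    have p1 : 0 ≤ ‖h‖ ^ m := by positivity
    have p2 : 0 ≤ ∑ j ∈ Finset.range m, ‖h‖ ^ j := Finset.sum_nonneg fun _ _ => by positivity
    nlinarith
  have hrem : ‖∑ j ∈ Finset.range n, a (j + 2) * h ^ (j + 2)‖ ≤ A * ‖h‖ ^ 2 * (9 / 8) := by
    calc _ ≤ ∑ j ∈ Finset.range n, A * ‖h‖ ^ 2 * ‖h‖ ^ j := by
          refine norm_sum_le_of_le _ fun j hj => ?_
          rw [norm_mul, norm_pow, pow_add, mul_comm (‖h‖ ^ j), ← mul_assoc]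
          gcongr
          exact ha _ (by have := Finset.mem_range.1 hj; omega)
      _ = A * ‖h‖ ^ 2 * ∑ j ∈ Finset.range n, ‖h‖ ^ j := by rw [Finset.mul_sum]
      _ ≤ _ := by gcongr; exact hgeo n
  have hx1 : q ^ 2 / A ^ 2 ≤ 1 := by
    rw [div_le_one (by positivity)]; gcongr
  have hx0 : 0 ≤ q ^ 2 / A ^ 2 := by positivity
  set x := q ^ 2 / A ^ 2 with hx
  have hrem2 : A * ‖h‖ ^ 2 * (9 / 8) ≤ s * x / 72 := by
    have : A * ‖h‖ ^ 2 * (9 / 8) = (s / A) * (s * x / 72) := by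
      rw [hr, hx]; field_simp; ring
    rw [this]
    have : s / A ≤ 1 := (div_le_one hA).2 h0
    have : 0 ≤ s * x / 72 := by positivity
    nlinarith
  have hlin : a 0 + a 1 * h = a 0 * ((1 - x / 9 : ℝ) : ℂ) := by
    have hc : a 1 * (starRingEnd ℂ) (a 1) = ((q ^ 2 : ℝ) : ℂ) := by
      rw [Complex.mul_conj, Complex.normSq_eq_norm_sq]
    have : a 1 * h = -(a 0 * (a 1 * (starRingEnd ℂ) (a 1))) / (9 * (A : ℂ) ^ 2) := by
      rw [hh]; ring
    rw [this, hc, hx]; push_cast; field_simp; ring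
  have hlinn : ‖a 0 + a 1 * h‖ = s * (1 - x / 9) := by
    rw [hlin, norm_mul, Complex.norm_real, Real.norm_of_nonneg (by linarith)]
  have htot : ‖∑ j ∈ Finset.range (n + 2), a j * h ^ j‖ ≤ s * (1 - 7 * x / 72) := by
    rw [Finset.sum_range_succ', Finset.sum_range_succ']
    have e : ∑ k ∈ Finset.range n, a (k + 1 + 1) * h ^ (k + 1 + 1) + a (0 + 1) * h ^ (0 + 1)
        + a 0 * h ^ 0 = (a 0 + a 1 * h) + ∑ j ∈ Finset.range n, a (j + 2) * h ^ (j + 2) := by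
      simp only [pow_zero, zero_add, pow_one, mul_one]; ring
    rw [e]
    refine (norm_add_le _ _).trans ?_
    rw [hlinn]; linarith
  have e2 : ‖a 0 * a 1‖ ^ 2 / (9 * A ^ 2) = s ^ 2 * x / 9 := by
    rw [norm_mul, hx, ← hs, ← hq]; field_simp
  rw [e2]
  calc _ ≤ (s * (1 - 7 * x / 72)) ^ 2 := by gcongr
    _ ≤ _ := by
      have : 0 ≤ s ^ 2 * x := by positivity
      have : 0 ≤ s ^ 2 * x * (1 - x) := by apply mul_nonneg this; linarith
      nlinarith

lemma taylor_eval_sum (p : Polynomial ℂ) (z h : ℂ) :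
    p.eval (z + h) = ∑ j ∈ Finset.range (p.natDegree + 1),
      (dEval p j z / (Nat.factorial j)) * h ^ j := by
  have : p.eval (z + h) = (taylor z p).eval h := by
    rw [taylor_eval, add_comm]
  rw [this, eval_eq_sum_range, natDegree_taylor]
  refine Finset.sum_congr rfl fun j _ => ?_
  congr 1
  rw [taylor_coeff, dEval, ← factorial_smul_hasseDeriv, eq_div_iff (by exact_mod_cast (Nat.factorial_ne_zero j))]
  simp [mul_comm]

lemma RN_eq (p : Polynomial ℂ) (z : ℂ) (h0 : p.eval z ≠ 0) (h1 : p.derivative.eval z ≠ 0) :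
    RN p z = z + -(p.eval z * (starRingEnd ℂ) (p.derivative.eval z)) / (9 * (Amax p z : ℂ) ^ 2) := by
  have hd : dEval p 1 z = p.derivative.eval z := by simp [dEval]
  have hk : kIndex p z = 1 := by
    unfold kIndex
    have hm : (1 : ℕ) ∈ {j : ℕ | 1 ≤ j ∧ dEval p j z ≠ 0} := ⟨le_rfl, by rwa [hd]⟩
    exact le_antisymm (Nat.sInf_le hm) (Nat.sInf_mem ⟨1, hm⟩).1
  have hu : uPar p 1 z = p.eval z * (starRingEnd ℂ) (p.derivative.eval z) := by
    simp [uPar, hd]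
  have hu0 : uPar p 1 z ≠ 0 := by
    rw [hu]; exact mul_ne_zero h0 ((_root_.map_ne_zero _).2 h1)
  have hg : gammaPar p 1 z = 2 := by simp [gammaPar]
  have hdl : deltaPar p 1 z = 0 := by simp [deltaPar]
  have hc : cPar p 1 z = 2 := by simp [cPar, hg, hdl]
  have ht : thetaPar p 1 z = Real.pi := by simp [thetaPar, hg, hc]
  rw [RN, hk, rniWith, ht, Complex.exp_pi_mul_I, ← hu, CPar, hc]
  have hn : ((‖uPar p 1 z‖ : ℝ) : ℂ) ≠ 0 := by exact_mod_cast (norm_ne_zero_iff.2 hu0)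
  have e : ((2 : ℤ) - ((1 : ℕ) : ℤ)) = 1 := by norm_num
  rw [e, zpow_one]
  push_cast
  by_cases hA : (Amax p z : ℂ) = 0
  · simp [hA]
  · field_simp; ring

lemma le_Amax (p : Polynomial ℂ) (z : ℂ) (j : ℕ) (hj : j < p.natDegree + 1) :
    ‖dEval p j z‖ / (Nat.factorial j) ≤ Amax p z :=
  Finset.le_sup' (fun j => ‖dEval p j z‖ / (Nat.factorial j : ℝ)) (Finset.mem_range.2 hj)

lemma RN_decrease (p : Polynomial ℂ) (hdeg : 2 ≤ p.natDegree) (z : ℂ)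
    (h0 : p.eval z ≠ 0) (h1 : p.derivative.eval z ≠ 0) :
    0 < Amax p z ∧ ‖p.eval (RN p z)‖ ^ 2 ≤
      ‖p.eval z‖ ^ 2 - ‖p.eval z * p.derivative.eval z‖ ^ 2 / (9 * Amax p z ^ 2) := by
  have hA : 0 < Amax p z := by
    refine lt_of_lt_of_le ?_ (le_Amax p z 0 (by omega))
    simpa [dEval] using h0
  refine ⟨hA, ?_⟩
  rw [RN_eq p z h0 h1, taylor_eval_sum]
  obtain ⟨n, hn⟩ : ∃ n, p.natDegree = n + 1 := ⟨p.natDegree - 1, by omega⟩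
  have := key_abs n (fun j => dEval p j z / (Nat.factorial j)) (Amax p z) hA
    (fun j hj => by
      have := le_Amax p z j (by omega)
      simpa using this) (by omega) _ rfl
  rw [hn]
  simpa [dEval] using this

/-- **Complexity of RNM.** Let `ε ∈ (0,1)` and `z₀` a seed with `|p(z₀)| > ε`. With
`S₀ = {z : |p(z)| ≤ |p(z₀)|}` and `A₀ = max {|p^{(j)}(z)|/j! : j = 0,…,n, z ∈ S₀}`, there is
an iteration index `t ≤ 9·A₀²·|p(z₀)|²/ε²` of the RNM orbit of `z₀` such that
`|p(z_t)| ≤ ε` or `|p(z_t)·p'(z_t)| ≤ ε`. -/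
theorem rnm_complexity (p : Polynomial ℂ) (hdeg : 2 ≤ p.natDegree)
    (ε : ℝ) (hε0 : 0 < ε) (hε1 : ε < 1)
    (z₀ : ℂ) (hz₀ : ε < ‖p.eval z₀‖)
    (A₀ : ℝ)
    (hA₀ : IsGreatest {a : ℝ | ∃ j ≤ p.natDegree, ∃ z : ℂ,
        ‖p.eval z‖ ≤ ‖p.eval z₀‖ ∧
        a = ‖dEval p j z‖ / (Nat.factorial j)} A₀) :
    ∃ t : ℕ, (t : ℝ) ≤ 9 * A₀ ^ 2 * ‖p.eval z₀‖ ^ 2 / ε ^ 2 ∧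
      (‖p.eval (rnmOrbit p z₀ t)‖ ≤ ε ∨
        ‖p.eval (rnmOrbit p z₀ t) * p.derivative.eval (rnmOrbit p z₀ t)‖ ≤ ε) := by
  by_contra hcon
  push Not at hcon
  set B := 9 * A₀ ^ 2 * ‖p.eval z₀‖ ^ 2 / ε ^ 2 with hB
  have hub := hA₀.2
  have hA0 : 0 < A₀ := by
    have : ‖dEval p 0 z₀‖ / (Nat.factorial 0) ≤ A₀ := hub ⟨0, by omega, z₀, le_rfl, rfl⟩
    simp [dEval] at this
    linarith
  have hB0 : 0 ≤ B := by positivity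
  set d := ε ^ 2 / (9 * A₀ ^ 2) with hd
  have hd0 : 0 < d := by positivity
  have main : ∀ t : ℕ, (t : ℝ) ≤ B + 1 →
      ‖p.eval (rnmOrbit p z₀ t)‖ ^ 2 ≤ ‖p.eval z₀‖ ^ 2 - t * d := by
    intro t
    induction t with
    | zero => intro _; simp [rnmOrbit]
    | succ t ih =>
      intro ht
      push_cast at ht
      have htB : (t : ℝ) ≤ B := by linarith
      have ih := ih (by linarith)
      obtain ⟨c1, c2⟩ := hcon t htB
      set z := rnmOrbit p z₀ t with hz
      have hp : p.eval z ≠ 0 := by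
        intro h; rw [h, norm_zero] at c1; linarith
      have hp' : p.derivative.eval z ≠ 0 := by
        intro h; rw [h, mul_zero, norm_zero] at c2; linarith
      obtain ⟨hA, hdec⟩ := RN_decrease p hdeg z hp hp'
      have hle : ‖p.eval z‖ ≤ ‖p.eval z₀‖ := by
        refine le_of_not_gt fun hlt => ?_
        have : 0 ≤ (t : ℝ) * d := by positivity
        have := pow_lt_pow_left₀ hlt (norm_nonneg _) (two_ne_zero)
        linarith
      have hAA : Amax p z ≤ A₀ := by
        refine Finset.sup'_le _ _ fun j hj => ?_
        exact hub ⟨j, by have := Finset.mem_range.1 hj; omega, z, hle, rfl⟩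
      have hdd : d ≤ ‖p.eval z * p.derivative.eval z‖ ^ 2 / (9 * Amax p z ^ 2) := by
        rw [hd]; gcongr
      have hst : rnmOrbit p z₀ (t + 1) = RN p z := by
        rw [rnmOrbit, if_neg hp]
      rw [hst]
      push_cast
      linarith
  have hfl := main (⌊B⌋₊ + 1) (by push_cast; linarith [Nat.floor_le hB0])
  have hlt := Nat.lt_floor_add_one B
  have hBd : B * d = ‖p.eval z₀‖ ^ 2 := by
    rw [hB, hd]; field_simp
  have h3 : B * d < (⌊B⌋₊ + 1 : ℝ) * d := mul_lt_mul_of_pos_right hlt hd0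
  push_cast at hfl
  have := sq_nonneg ‖p.eval (rnmOrbit p z₀ (⌊B⌋₊ + 1))‖
  linarith
end
end

section
/- Convergence of RNM below the critical threshold: Let p be a polynomial with complex coefficients of degree n ≥ 2 and let z₀ ∈ ℂ be a seed such that |p(z₀)| ≤ |p(w)| for every critical point w of p with p'(w) = 0 and p(w) ≠ 0. Then the RNM orbit z₀, z₁, z₂, … converges to a root of p, i.e., there exists θ* ∈ ℂ with p(θ*) = 0 such that z_t → θ* as t → ∞. -/
open Polynomial Filter Topology
open scoped Classical

noncomputable section

lemma core_aux (q : Polynomial ℂ) (k : ℕ) (hk : 1 ≤ k) (A r : ℝ) (hA : ∀ j, ‖q.coeff j‖ ≤ A)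
    (hz : ∀ j, 1 ≤ j → j < k → q.coeff j = 0) (h : ℂ) (hr : ‖h‖ = r) (r0 : 0 < r)
    (r9 : r ≤ 1 / 9) (A0 : 0 < A)
    (hdec : 2 * ((starRingEnd ℂ) (q.coeff 0) * (q.coeff k * h ^ k)).re
      = -(18 * A ^ 2 * r ^ (k + 1))) :
    ‖q.eval h‖ ^ 2 < ‖q.coeff 0‖ ^ 2 := by
  obtain ⟨S, hS, hSn⟩ : ∃ S : ℂ, q.eval h = q.coeff 0 + (q.coeff k * h ^ k + S) ∧
      ‖S‖ ≤ 9 / 8 * A * r ^ (k + 1) := by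
    refine ⟨∑ i ∈ Finset.range (q.natDegree + 1), q.coeff (k + 1 + i) * h ^ (k + 1 + i), ?_, ?_⟩
    · rw [Polynomial.eval_eq_sum_range' (n := k + 1 + (q.natDegree + 1)) (by omega),
        Finset.sum_range_add, Finset.sum_range_succ, ← add_assoc]
      congr 2
      rw [Finset.sum_eq_single 0]
      · simp
      · intro j hj hj0
        rw [hz j (by omega) (by simpa using hj)]; simp
      · intro h0; simp at h0; omega
    · have hg : ∑ i ∈ Finset.range (q.natDegree + 1), r ^ i ≤ 9 / 8 := by
        have h1 := mul_neg_geom_sum r (q.natDegree + 1)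
        have h2 : 0 < r ^ (q.natDegree + 1) := by positivity
        have h3 : 0 ≤ ∑ i ∈ Finset.range (q.natDegree + 1), r ^ i :=
          Finset.sum_nonneg (fun i _ => by positivity)
        nlinarith
      calc _ ≤ ∑ i ∈ Finset.range (q.natDegree + 1), A * r ^ (k + 1) * r ^ i := by
            refine norm_sum_le_of_le _ (fun i _ => ?_)
            rw [norm_mul, norm_pow, hr, pow_add r (k + 1) i, ← mul_assoc, mul_assoc, mul_assoc A]
            gcongr
            exact hA _
        _ = A * r ^ (k + 1) * ∑ i ∈ Finset.range (q.natDegree + 1), r ^ i := by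
            rw [Finset.mul_sum]
        _ ≤ A * r ^ (k + 1) * (9 / 8) := by gcongr
        _ = _ := by ring
  set a := q.coeff 0
  set b := q.coeff k * h ^ k
  have hb : ‖b‖ ≤ A * r ^ k := by
    simp only [b]; rw [norm_mul, norm_pow, hr]; gcongr; exact hA _
  have hexp : ‖a + (b + S)‖ ^ 2 = ‖a‖ ^ 2 + 2 * ((starRingEnd ℂ) a * b).re
      + 2 * ((starRingEnd ℂ) a * S).re + ‖b + S‖ ^ 2 := by
    simp only [← Complex.normSq_eq_norm_sq, Complex.normSq_apply, Complex.add_re, Complex.add_im,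
      Complex.mul_re, Complex.conj_re, Complex.conj_im]
    ring
  have h1 : ((starRingEnd ℂ) a * S).re ≤ A * (9 / 8 * A * r ^ (k + 1)) := by
    refine (Complex.re_le_norm _).trans ?_
    rw [norm_mul, RCLike.norm_conj]
    gcongr
    exact hA 0
  have h2 : ‖b + S‖ ≤ 9 / 8 * A * r ^ k := by
    refine (norm_add_le _ _).trans ?_
    have : r ^ (k + 1) ≤ 1 / 9 * r ^ k := by
      rw [pow_succ, mul_comm]; gcongr
    nlinarith
  have h3 : ‖b + S‖ ^ 2 ≤ (9 / 8 * A * r ^ k) ^ 2 := by gcongr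
  have h4 : (r ^ k) ^ 2 ≤ r ^ (k + 1) := by
    rw [← pow_mul]
    exact pow_le_pow_of_le_one r0.le (by linarith) (by omega)
  have h5 : 0 < A ^ 2 * r ^ (k + 1) := by positivity
  have h6 : A ^ 2 * (r ^ k) ^ 2 ≤ A ^ 2 * r ^ (k + 1) := by gcongr
  rw [hS, hexp]
  nlinarith

lemma dEval_taylor (p : Polynomial ℂ) (j : ℕ) (z : ℂ) :
    dEval p j z = (Nat.factorial j : ℂ) * (taylor z p).coeff j := by
  rw [dEval, taylor_coeff, ← factorial_smul_hasseDeriv]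
  simp

lemma coeff_norm (p : Polynomial ℂ) (j : ℕ) (z : ℂ) :
    ‖(taylor z p).coeff j‖ = ‖dEval p j z‖ / (Nat.factorial j) := by
  rw [dEval_taylor, norm_mul]
  have : (Nat.factorial j : ℝ) ≠ 0 := by positivity
  simp; field_simp

lemma Amax_pos (p : Polynomial ℂ) (hp : p ≠ 0) (z : ℂ) : 0 < Amax p z := by
  have h : ‖(taylor z p).coeff p.natDegree‖ ≤ Amax p z := by
    rw [coeff_norm]
    exact Finset.le_sup' (fun j => ‖dEval p j z‖ / (Nat.factorial j)) (by simp)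
  refine lt_of_lt_of_le ?_ h
  rw [norm_pos_iff, ← natDegree_taylor p z]
  simp [hp]

lemma coeff_le_Amax (p : Polynomial ℂ) (hp : p ≠ 0) (z : ℂ) (j : ℕ) :
    ‖(taylor z p).coeff j‖ ≤ Amax p z := by
  by_cases hj : j ≤ p.natDegree
  · rw [coeff_norm]
    exact Finset.le_sup' (fun j => ‖dEval p j z‖ / (Nat.factorial j)) (by simp; omega)
  · rw [coeff_eq_zero_of_natDegree_lt (by rw [natDegree_taylor]; omega)]
    simpa using (Amax_pos p hp z).le

lemma uPar_eq (p : Polynomial ℂ) (m : ℕ) (z : ℂ) :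
    uPar p m z = (taylor z p).coeff 0 * (starRingEnd ℂ) ((taylor z p).coeff m) := by
  have : (Nat.factorial m : ℂ) ≠ 0 := by exact_mod_cast (Nat.factorial_pos m).ne'
  rw [uPar, dEval_taylor, taylor_coeff_zero]
  simp; field_simp

lemma kIndex_spec (p : Polynomial ℂ) (hdeg : 2 ≤ p.natDegree) (z : ℂ) :
    1 ≤ kIndex p z ∧ dEval p (kIndex p z) z ≠ 0 := by
  have hp : p ≠ 0 := by rintro rfl; simp at hdeg
  refine Nat.sInf_mem (s := {j : ℕ | 1 ≤ j ∧ dEval p j z ≠ 0}) ⟨p.natDegree, by omega, ?_⟩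
  rw [dEval_taylor]
  refine mul_ne_zero (by exact_mod_cast (Nat.factorial_pos _).ne') ?_
  rw [← natDegree_taylor p z]
  simp [hp]

lemma angle_spec (p : Polynomial ℂ) (m : ℕ) (hm : 1 ≤ m) (z : ℂ) :
    2 * (uPar p m z ^ (m - 1) * Complex.exp ((↑(thetaPar p m z) : ℂ) * Complex.I) ^ m).re
      = - cPar p m z := by
  have hm0 : (m : ℝ) ≠ 0 := by positivity
  have hm0' : (m : ℂ) ≠ 0 := by exact_mod_cast hm0
  set w := uPar p m z ^ (m - 1) with hw
  rw [← Complex.exp_nat_mul]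
  have hg : gammaPar p m z = 2 * w.re := rfl
  have hd : deltaPar p m z = -2 * w.im := rfl
  have e1 : Complex.exp (3 * (Real.pi : ℂ) / 2 * Complex.I) = -Complex.I := by
    have : 3 * (Real.pi : ℂ) / 2 * Complex.I
      = Real.pi * Complex.I + Real.pi / 2 * Complex.I := by ring
    rw [this, Complex.exp_add, Complex.exp_pi_mul_I, Complex.exp_pi_div_two_mul_I]; ring
  unfold thetaPar
  split_ifs with h1 h2 h2
  · rw [h1, abs_of_neg h2, hg]; simp
  · have : (m : ℂ) * (((Real.pi / m : ℝ) : ℂ) * Complex.I) = Real.pi * Complex.I := by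
      push_cast; field_simp
    rw [this, Complex.exp_pi_mul_I, h1, abs_of_nonneg (not_lt.1 h2), hg]; simp
  · have : (m : ℂ) * (((Real.pi / (2 * m) : ℝ) : ℂ) * Complex.I) = Real.pi / 2 * Complex.I := by
      push_cast; field_simp
    have hc : cPar p m z = |deltaPar p m z| := (max_choice _ _).resolve_left h1
    rw [this, Complex.exp_pi_div_two_mul_I, hc, abs_of_neg h2, hd]; simp
  · have : (m : ℂ) * (((3 * Real.pi / (2 * m) : ℝ) : ℂ) * Complex.I)
        = 3 * Real.pi / 2 * Complex.I := by
      push_cast; field_simp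
    have hc : cPar p m z = |deltaPar p m z| := (max_choice _ _).resolve_left h1
    rw [this, e1, hc, abs_of_nonneg (not_lt.1 h2), hd]; simp

lemma RN_lt (p : Polynomial ℂ) (hdeg : 2 ≤ p.natDegree) (z : ℂ) (hz : p.eval z ≠ 0) :
    ‖p.eval (RN p z)‖ < ‖p.eval z‖ := by
  have hp : p ≠ 0 := by rintro rfl; simp at hdeg
  obtain ⟨hk1, hk2⟩ := kIndex_spec p hdeg z
  have hkz : ∀ j, 1 ≤ j → j < kIndex p z → (taylor z p).coeff j = 0 := by
    intro j hj hjk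
    by_contra hne
    refine Nat.notMem_of_lt_sInf (s := {j : ℕ | 1 ≤ j ∧ dEval p j z ≠ 0}) hjk ⟨hj, ?_⟩
    rw [dEval_taylor]
    exact mul_ne_zero (by exact_mod_cast (Nat.factorial_pos _).ne') hne
  unfold RN
  set k := kIndex p z
  have hA := coeff_le_Amax p hp z
  have hA0 := Amax_pos p hp z
  have hang := angle_spec p k hk1 z
  have hu := uPar_eq p k z
  have hak : (taylor z p).coeff k ≠ 0 := by
    intro h0; apply hk2; rw [dEval_taylor, h0]; simp
  have ha0 : (taylor z p).coeff 0 = p.eval z := taylor_coeff_zero _ _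
  have hu0 : uPar p k z ≠ 0 := by
    rw [hu, ha0]; exact mul_ne_zero hz (by simpa using hak)
  set u := uPar p k z
  set A := Amax p z
  have hun : 0 < ‖u‖ := norm_pos_iff.2 hu0
  have huA : ‖u‖ ≤ A ^ 2 := by
    rw [hu, norm_mul, RCLike.norm_conj, sq]
    exact mul_le_mul (hA 0) (hA k) (norm_nonneg _) hA0.le
  have hc0 : 0 < cPar p k z := by
    by_contra hcon
    have hg : |gammaPar p k z| ≤ 0 := (le_max_left _ _).trans (not_lt.1 hcon)
    have hd : |deltaPar p k z| ≤ 0 := (le_max_right _ _).trans (not_lt.1 hcon)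
    have hg' := abs_nonpos_iff.1 hg
    have hd' := abs_nonpos_iff.1 hd
    simp only [gammaPar, deltaPar] at hg' hd'
    have : u ^ (k - 1) = 0 := by
      apply Complex.ext
      · simp only [Complex.zero_re]; linarith
      · simp only [Complex.zero_im]; linarith
    exact pow_ne_zero _ hu0 this
  have hc2 : cPar p k z ≤ 2 * ‖u‖ ^ (k - 1) := by
    rw [← norm_pow]
    refine max_le ?_ ?_
    · rw [gammaPar, abs_mul, abs_two]
      gcongr; exact Complex.abs_re_le_norm _
    · rw [deltaPar, abs_mul, abs_neg, abs_two]
      gcongr; exact Complex.abs_im_le_norm _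
  have hzp : ‖u‖ ^ ((2 : ℤ) - (k : ℤ)) * ‖u‖ ^ (k - 1) = ‖u‖ := by
    rw [← zpow_natCast, ← zpow_add₀ hun.ne']
    have : (2 : ℤ) - (k : ℤ) + ((k - 1 : ℕ) : ℤ) = 1 := by omega
    rw [this, zpow_one]
  set c := cPar p k z
  set e := ‖u‖ ^ ((2 : ℤ) - (k : ℤ)) with he
  have he0 : 0 < e := by positivity
  have hC : CPar p k z = c * e / (6 * A ^ 2) := rfl
  set r := CPar p k z / 3 with hrdef
  have hr0 : 0 < r := by rw [hrdef, hC]; positivity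
  have hr9 : r ≤ 1 / 9 := by
    rw [hrdef, hC, div_div, div_le_iff₀ (by positivity)]
    have : c * e ≤ 2 * ‖u‖ ^ (k - 1) * e := by gcongr
    have h2 : 2 * ‖u‖ ^ (k - 1) * e = 2 * ‖u‖ := by rw [← hzp]; simp only [hzp]; linarith
    nlinarith
  have hce : c * e = 18 * A ^ 2 * r := by rw [hrdef, hC]; field_simp; norm_num
  set E := Complex.exp ((↑(thetaPar p k z) : ℂ) * Complex.I) with hE
  have hrn : rniWith p k z = ((r : ℂ) * (u / (‖u‖ : ℂ)) * E) + z := by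
    rw [rniWith, add_comm]
  rw [hrn, ← taylor_eval, ← ha0]
  have hun' : ((‖u‖ : ℝ) : ℂ) ≠ 0 := by exact_mod_cast hun.ne'
  refine lt_of_pow_lt_pow_left₀ 2 (norm_nonneg _) (core_aux (taylor z p) k hk1 A r hA hkz _ ?_ hr0 hr9 hA0 ?_)
  · rw [norm_mul, norm_mul, norm_div, hE, Complex.norm_exp_ofReal_mul_I]
    simp only [Complex.norm_real, Real.norm_eq_abs, abs_of_pos hr0, mul_one, abs_norm]
    field_simp
  · have h1 : (starRingEnd ℂ) ((taylor z p).coeff 0) * ((taylor z p).coeff k *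
        ((r : ℂ) * (u / (‖u‖ : ℂ)) * E) ^ k) = ((r ^ k * e : ℝ) : ℂ) * (u ^ (k - 1) * E ^ k) := by
      have hcu : (starRingEnd ℂ) ((taylor z p).coeff 0) * (taylor z p).coeff k
          = (starRingEnd ℂ) u := by rw [hu]; simp
      have hez : ((e : ℝ) : ℂ) = (‖u‖ : ℂ) ^ 2 / (‖u‖ : ℂ) ^ k := by
        rw [he, zpow_sub₀ hun.ne']; push_cast; norm_cast
      have hnn : (‖u‖ : ℂ) ^ 2 = (starRingEnd ℂ) u * u := by
        rw [mul_comm, Complex.mul_conj, Complex.normSq_eq_norm_sq]; push_cast; rfl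
      have hpk : u ^ k = u * u ^ (k - 1) := by
        rw [← pow_succ']; congr 1; omega
      rw [← mul_assoc, hcu, Complex.ofReal_mul, hez, hnn, mul_pow, mul_pow, div_pow, hpk]
      push_cast
      ring
    rw [h1, Complex.re_ofReal_mul]
    have : 2 * (r ^ k * e * (u ^ (k - 1) * E ^ k).re) = r ^ k * e * (2 * (u ^ (k - 1) * E ^ k).re) := by
      ring
    rw [this, hang, pow_succ]
    linear_combination (- r ^ k) * hce

/-- The smooth (index one) form of the iterate. -/
def NN (p : Polynomial ℂ) (z : ℂ) : ℂ :=
  z - uPar p 1 z / ((9 * Amax p z ^ 2 : ℝ) : ℂ)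

lemma RN_eq_NN (p : Polynomial ℂ) (z : ℂ) (hz : p.eval z ≠ 0)
    (hd : p.derivative.eval z ≠ 0) : RN p z = NN p z := by
  have hp : p ≠ 0 := by rintro rfl; simp at hz
  have hd1 : dEval p 1 z ≠ 0 := by simpa [dEval] using hd
  have hk : kIndex p z = 1 := by
    have hm : (1 : ℕ) ∈ {j : ℕ | 1 ≤ j ∧ dEval p j z ≠ 0} := ⟨le_rfl, hd1⟩
    exact le_antisymm (Nat.sInf_le hm) (Nat.sInf_mem ⟨1, hm⟩).1
  have hu : uPar p 1 z ≠ 0 := by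
    simp only [uPar]
    refine mul_ne_zero (mul_ne_zero (by simp) hz) (by simpa using hd1)
  have hun : (‖uPar p 1 z‖ : ℂ) ≠ 0 := by simpa using hu
  have hA : (Amax p z : ℂ) ≠ 0 := by exact_mod_cast (Amax_pos p hp z).ne'
  have hg : gammaPar p 1 z = 2 := by simp [gammaPar]
  have hdl : deltaPar p 1 z = 0 := by simp [deltaPar]
  have hc : cPar p 1 z = 2 := by simp [cPar, hg, hdl]
  have ht : thetaPar p 1 z = Real.pi := by
    unfold thetaPar
    rw [hc, hg]; norm_num
  rw [RN, hk, rniWith, ht, Complex.exp_pi_mul_I, CPar, hc, NN]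
  have : ((2 : ℤ) - ((1 : ℕ) : ℤ)) = 1 := by norm_num
  rw [this, zpow_one]
  push_cast
  field_simp
  ring

lemma NN_cont (p : Polynomial ℂ) (hp : p ≠ 0) : Continuous (NN p) := by
  have hdc : ∀ j, Continuous (dEval p j) := fun j => by
    unfold dEval; exact Polynomial.continuous _
  have hA : Continuous (Amax p) := by
    have := Continuous.finset_sup' (s := Finset.range (p.natDegree + 1))
      (f := fun j z => ‖dEval p j z‖ / (Nat.factorial j : ℝ)) Finset.nonempty_range_add_one
      (fun i _ => (hdc i).norm.div_const _)
    convert this using 1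
    ext z; simp [Amax, Finset.sup'_apply]
  have hu : Continuous (uPar p 1) := by
    unfold uPar
    exact (continuous_const.mul p.continuous).mul (Complex.continuous_conj.comp (hdc 1))
  unfold NN
  refine continuous_id.sub (hu.div (Complex.continuous_ofReal.comp (by fun_prop)) fun z => ?_)
  have := Amax_pos p hp z
  exact_mod_cast (by positivity : (9 * Amax p z ^ 2 : ℝ) ≠ 0)

lemma NN_root (p : Polynomial ℂ) (z : ℂ) (hz : p.eval z = 0) : NN p z = z := by
  simp [NN, uPar, hz]

lemma conv_aux (p : Polynomial ℂ) (hp : p ≠ 0) (N : ℂ → ℂ) (hN : Continuous N) (y : ℕ → ℂ)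
    (hy : ∀ t, y (t + 1) = N (y t)) (w : ℂ) (hw : p.eval w = 0) (hNw : N w = w)
    (φ : ℕ → ℕ) (hφ : StrictMono φ) (hlim : Tendsto (y ∘ φ) atTop (𝓝 w))
    (h0 : Tendsto (fun t => ‖p.eval (y t)‖) atTop (𝓝 0)) : Tendsto y atTop (𝓝 w) := by
  have hfin : Set.Finite ({z : ℂ | p.eval z = 0} \ {w}) :=
    (Polynomial.finite_setOf_isRoot hp).subset Set.diff_subset
  have hU : ({z : ℂ | p.eval z = 0} \ {w})ᶜ ∈ 𝓝 w :=
    hfin.isClosed.isOpen_compl.mem_nhds (by simp)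
  obtain ⟨ε₀, hε₀, hsub⟩ := Metric.mem_nhds_iff.1 hU
  rw [Metric.tendsto_atTop]
  intro ε' hε'
  obtain ⟨ε, hε, hε1, hε2⟩ : ∃ ε > 0, ε < ε₀ ∧ ε < ε' :=
    ⟨min ε₀ ε' / 2, by positivity, by
      have := min_le_left ε₀ ε'; linarith, by have := min_le_right ε₀ ε'; linarith⟩
  obtain ⟨η₀, hη₀, hη⟩ := Metric.continuous_iff.1 hN w ε hε
  rw [hNw] at hη
  set η := min η₀ ε with hηd
  have hηpos : 0 < η := by positivity
  have hK : IsCompact (Metric.closedBall w ε \ Metric.ball w η) :=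
    (isCompact_closedBall w ε).diff Metric.isOpen_ball
  obtain ⟨m, hm, hmK⟩ : ∃ m > 0, ∀ z ∈ Metric.closedBall w ε \ Metric.ball w η,
      m ≤ ‖p.eval z‖ := by
    by_cases hne : (Metric.closedBall w ε \ Metric.ball w η).Nonempty
    · obtain ⟨x, hx, hmin⟩ := hK.exists_isMinOn hne
        (f := fun z => ‖p.eval z‖) p.continuous.norm.continuousOn
      refine ⟨‖p.eval x‖, ?_, fun z hz => hmin hz⟩
      rw [gt_iff_lt, norm_pos_iff]
      intro hx0
      have hxb : x ∈ Metric.ball w ε₀ := by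
        have := hx.1; rw [Metric.mem_closedBall] at this; rw [Metric.mem_ball]; linarith
      have hxw : x ≠ w := by
        rintro rfl; exact hx.2 (Metric.mem_ball_self hηpos)
      exact hsub hxb ⟨hx0, hxw⟩
    · exact ⟨1, one_pos, fun z hz => (hne ⟨z, hz⟩).elim⟩
  obtain ⟨T, hT⟩ := (h0.eventually (gt_mem_nhds hm)).exists_forall_of_atTop
  obtain ⟨s, hs⟩ := (hlim.eventually (Metric.ball_mem_nhds w hηpos)).exists_forall_of_atTop
  set S := max T s
  have hST : T ≤ φ S := (le_max_left _ _).trans (hφ.id_le S)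
  have key : ∀ t, φ S ≤ t → dist (y t) w < η := by
    intro t ht
    induction t, ht using Nat.le_induction with
    | base => exact hs S (le_max_right _ _)
    | succ t ht ih =>
      have h1 : dist (y (t + 1)) w < ε := by
        rw [hy]; exact hη _ (ih.trans_le (min_le_left _ _))
      by_contra hcon
      have := hmK (y (t + 1)) ⟨h1.le, hcon⟩
      have := hT (t + 1) (by omega)
      linarith
  exact ⟨φ S, fun t ht => (key t ht).trans (lt_of_le_of_lt (min_le_right _ _) hε2)⟩

/-- **Convergence of RNM below the critical threshold.** If `|p(z₀)| ≤ |p(w)|` for every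
critical point `w` of `p` with `p(w) ≠ 0`, then the RNM orbit of `z₀` converges to a root
of `p`. -/
theorem rnm_converges_below_threshold (p : Polynomial ℂ) (hdeg : 2 ≤ p.natDegree)
    (z₀ : ℂ)
    (hthr : ∀ w : ℂ, p.derivative.eval w = 0 → p.eval w ≠ 0 →
      ‖p.eval z₀‖ ≤ ‖p.eval w‖) :
    ∃ θstar : ℂ, p.eval θstar = 0 ∧
      Filter.Tendsto (rnmOrbit p z₀) Filter.atTop (nhds θstar) := by
  have hp : p ≠ 0 := by rintro rfl; simp at hdeg
  by_cases hz0 : p.eval z₀ = 0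
  · refine ⟨z₀, hz0, ?_⟩
    have : rnmOrbit p z₀ = fun _ => z₀ := by
      funext t
      induction t with
      | zero => rfl
      | succ t ih => simp [rnmOrbit, ih, hz0]
    rw [this]; exact tendsto_const_nhds
  have hstep : ∀ t, ‖p.eval (rnmOrbit p z₀ (t + 1))‖ ≤ ‖p.eval (rnmOrbit p z₀ t)‖ := by
    intro t
    rw [rnmOrbit]
    split_ifs with h
    · exact le_rfl
    · exact (RN_lt p hdeg _ h).le
  set y : ℕ → ℂ := fun t => rnmOrbit p z₀ (t + 1) with hyd
  have hanti : Antitone (fun t => ‖p.eval (y t)‖) := antitone_nat_of_succ_le fun t => hstep (t + 1)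
  have hy0 : ‖p.eval (y 0)‖ < ‖p.eval z₀‖ := by
    have : y 0 = RN p z₀ := by simp [hyd, rnmOrbit, hz0]
    rw [this]; exact RN_lt p hdeg z₀ hz0
  have hgood : ∀ w, ‖p.eval w‖ ≤ ‖p.eval (y 0)‖ → p.eval w ≠ 0 → p.derivative.eval w ≠ 0 :=
    fun w hw hw0 hd => absurd (hthr w hd hw0) (by linarith)
  have hy : ∀ t, y (t + 1) = NN p (y t) := by
    intro t
    have : y (t + 1) = if p.eval (y t) = 0 then y t else RN p (y t) := rfl
    rw [this]
    split_ifs with h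
    · rw [NN_root p _ h]
    · exact RN_eq_NN p _ h (hgood _ (hanti (Nat.zero_le t)) h)
  have hNc := NN_cont p hp
  -- compactness
  have hcoc : Tendsto (fun z : ℂ => ‖p.eval z‖) (cocompact ℂ) atTop :=
    Polynomial.tendsto_norm_atTop p (natDegree_pos_iff_degree_pos.1 (by omega))
      (tendsto_norm_cocompact_atTop)
  obtain ⟨K, hK, hKs⟩ := mem_cocompact.1 (hcoc.eventually (eventually_gt_atTop ‖p.eval (y 0)‖))
  have hyK : ∀ t, y t ∈ K := by
    intro t
    by_contra hcon
    have h1 : ‖p.eval (y 0)‖ < ‖p.eval (y t)‖ := hKs hcon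
    exact absurd (hanti (Nat.zero_le t)) (not_le.2 h1)
  obtain ⟨w, -, φ, hφ, hlim⟩ := hK.tendsto_subseq hyK
  obtain ⟨l, hl⟩ : ∃ l, Tendsto (fun t => ‖p.eval (y t)‖) atTop (𝓝 l) :=
    ⟨_, tendsto_atTop_ciInf hanti ⟨0, by rintro _ ⟨t, rfl⟩; exact norm_nonneg _⟩⟩
  have hpc : Continuous fun z : ℂ => ‖p.eval z‖ := p.continuous.norm
  have h1 : ‖p.eval w‖ = l :=
    tendsto_nhds_unique ((hpc.tendsto w).comp hlim) (hl.comp hφ.tendsto_atTop)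
  have h2 : ‖p.eval (NN p w)‖ = l := by
    refine tendsto_nhds_unique (((hpc.comp hNc).tendsto w).comp hlim)
      ((hl.comp (tendsto_add_atTop_nat 1)).comp hφ.tendsto_atTop |>.congr fun t => ?_)
    simp [hy]
  have hw : p.eval w = 0 := by
    by_contra hw
    have hle : ‖p.eval w‖ ≤ ‖p.eval (y 0)‖ := by
      rw [h1]; exact hanti.le_of_tendsto hl 0
    have := RN_lt p hdeg w hw
    rw [RN_eq_NN p w hw (hgood w hle hw)] at this
    linarith
  have hl0 : l = 0 := by rw [← h1, hw, norm_zero]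
  rw [hl0] at hl
  refine ⟨w, hw, (tendsto_add_atTop_iff_nat 1).1 ?_⟩
  exact conv_aux p hp (NN p) hNc y hy w hw (NN_root p w hw) φ hφ hlim hl
end
end

section
/- RNM orbit invariance of Voronoi regions for z² − 1: Let p(z) = z² − 1 and let z₀ ∈ ℂ with Re z₀ < 0 (respectively Re z₀ > 0). Then the Robust Newton iterate N̂_p(z₀) also satisfies Re N̂_p(z₀) < 0 (respectively Re N̂_p(z₀) > 0); consequently the RNM orbit of z₀ remains in the same open half-plane for all iterations. -/
open Polynomial Filter Topology
open scoped Classical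

noncomputable section

lemma aux_d1 (z : ℂ) : dEval (X ^ 2 - 1 : Polynomial ℂ) 1 z = 2 * z := by
  simp [dEval]
  left; norm_num

lemma aux_k (z : ℂ) (hz : z ≠ 0) : kIndex (X ^ 2 - 1 : Polynomial ℂ) z = 1 := by
  unfold kIndex
  have h1 : (1 : ℕ) ∈ {j : ℕ | 1 ≤ j ∧ dEval (X ^ 2 - 1 : Polynomial ℂ) j z ≠ 0} :=
    ⟨le_rfl, by rw [aux_d1]; simpa using hz⟩
  exact le_antisymm (Nat.sInf_le h1) (Nat.sInf_mem ⟨1, h1⟩).1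

lemma aux_A (z : ℂ) : 2 * ‖z‖ ≤ Amax (X ^ 2 - 1 : Polynomial ℂ) z := by
  have hd : (X ^ 2 - 1 : Polynomial ℂ).natDegree = 2 := by compute_degree!
  have h := Finset.le_sup' (s := Finset.range ((X ^ 2 - 1 : Polynomial ℂ).natDegree + 1))
    (fun j => ‖dEval (X ^ 2 - 1 : Polynomial ℂ) j z‖ / (Nat.factorial j))
    (b := 1) (by rw [hd]; simp)
  unfold Amax
  refine le_trans (le_of_eq ?_) h
  simp [aux_d1]

lemma aux_RN (z : ℂ) (hz : z ≠ 0) : RN (X ^ 2 - 1 : Polynomial ℂ) z =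
    z - ((1 / (9 * (Amax (X ^ 2 - 1 : Polynomial ℂ) z) ^ 2) : ℝ) : ℂ) *
      ((z ^ 2 - 1) * (starRingEnd ℂ) (2 * z)) := by
  have hu : uPar (X ^ 2 - 1 : Polynomial ℂ) 1 z = (z ^ 2 - 1) * (starRingEnd ℂ) (2 * z) := by
    simp [uPar, aux_d1]
  have hc : cPar (X ^ 2 - 1 : Polynomial ℂ) 1 z = 2 := by
    simp [cPar, gammaPar, deltaPar]
  have ht : thetaPar (X ^ 2 - 1 : Polynomial ℂ) 1 z = Real.pi := by
    rw [thetaPar, hc]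
    simp [gammaPar]
  rw [RN, aux_k z hz, rniWith, CPar, hc, ht, hu, Complex.exp_pi_mul_I]
  set u := (z ^ 2 - 1) * (starRingEnd ℂ) (2 * z)
  have hA : Amax (X ^ 2 - 1 : Polynomial ℂ) z ≠ 0 := by
    have := aux_A z
    have := norm_pos_iff.mpr hz
    intro h
    linarith
  have hA' : ((Amax (X ^ 2 - 1 : Polynomial ℂ) z : ℝ) : ℂ) ≠ 0 := by exact_mod_cast hA
  by_cases h0 : u = 0
  · simp [h0]
  · have hn : ((‖u‖ : ℝ) : ℂ) ≠ 0 := by simpa using h0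
    have he : ((2 : ℤ) - ((1 : ℕ) : ℤ)) = 1 := by norm_num
    rw [he, zpow_one]
    push_cast
    field_simp
    ring

lemma aux_re (z : ℂ) (hz : z ≠ 0) :
    ∃ c : ℝ, 0 < c ∧ (RN (X ^ 2 - 1 : Polynomial ℂ) z).re = c * z.re := by
  have hA := aux_A z
  have hn := norm_pos_iff.mpr hz
  have hsq := Complex.sq_norm z
  rw [Complex.normSq_apply] at hsq
  rw [aux_RN z hz]
  set A := Amax (X ^ 2 - 1 : Polynomial ℂ) z
  have hA0 : 0 < A := by linarith
  refine ⟨1 - 1 / (9 * A ^ 2) * (2 * (‖z‖ ^ 2 - 1)), ?_, ?_⟩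
  · rw [sub_pos, one_div, inv_mul_lt_iff₀ (by positivity)]
    nlinarith
  · rw [Complex.sub_re, Complex.re_ofReal_mul, hsq]
    simp [pow_two]
    ring

/-- **RNM orbit invariance of Voronoi regions for `z² − 1`.** If `Re z₀ < 0`
(respectively `Re z₀ > 0`) then the Robust Newton iterate satisfies `Re N̂_p(z₀) < 0`
(respectively `Re N̂_p(z₀) > 0`); consequently the whole RNM orbit of `z₀` remains in the
same open half-plane. -/
theorem rnm_voronoi_invariance :
    (∀ z₀ : ℂ, z₀.re < 0 →
      (RN (X ^ 2 - 1 : Polynomial ℂ) z₀).re < 0 ∧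
      ∀ t : ℕ, (rnmOrbit (X ^ 2 - 1 : Polynomial ℂ) z₀ t).re < 0) ∧
    (∀ z₀ : ℂ, 0 < z₀.re →
      0 < (RN (X ^ 2 - 1 : Polynomial ℂ) z₀).re ∧
      ∀ t : ℕ, 0 < (rnmOrbit (X ^ 2 - 1 : Polynomial ℂ) z₀ t).re) := by
  have h1 : ∀ z : ℂ, z.re < 0 → (RN (X ^ 2 - 1 : Polynomial ℂ) z).re < 0 := by
    intro z hz
    obtain ⟨c, hc, h⟩ := aux_re z (by rintro rfl; simp at hz)
    rw [h]
    exact mul_neg_of_pos_of_neg hc hz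
  have h2 : ∀ z : ℂ, 0 < z.re → 0 < (RN (X ^ 2 - 1 : Polynomial ℂ) z).re := by
    intro z hz
    obtain ⟨c, hc, h⟩ := aux_re z (by rintro rfl; simp at hz)
    rw [h]
    exact mul_pos hc hz
  refine ⟨fun z hz => ⟨h1 z hz, fun t => ?_⟩, fun z hz => ⟨h2 z hz, fun t => ?_⟩⟩
  · induction t with
    | zero => exact hz
    | succ t ih =>
      rw [rnmOrbit]
      split_ifs
      · exact ih
      · exact h1 _ ih
  · induction t with
    | zero => exact hz
    | succ t ih =>
      rw [rnmOrbit]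
      split_ifs
      · exact ih
      · exact h2 _ ih
end
end
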